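/- Let A be a finite-dimensional left-symmetric color algebra over k with respect to ε, and let P be a Nijenhuis operator on A with ε(|P|,|P|) = 1. Then for every d ∈ ℕ and every c ∈ k, the map c·P^d (which is homogeneous of degree d·|P|) is again a Nijenhuis operator on A. -/

import Mathlib

open scoped TensorProduct

/-- A skew-symmetric bicharacter of an abelian group `G` over a field `k`. -/
structure Bicharacter (G : Type*) (k : Type*) [AddCommGroup G] [Field k] where
  ε : G → G → k
  ne_zero : ∀ a b : G, ε a b ≠ 0
  add_left : ∀ a b c : G, ε (a + b) c = ε a c * ε b c
  add_right : ∀ a b c : G, ε a (b + c) = ε a b * ε a c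
  skew : ∀ a b : G, ε a b * ε b a = 1

/-- `(A, 𝒜, μ)` is a left-symmetric color algebra over `k` with respect to the
skew-symmetric bicharacter `ε`: the grading `𝒜` is an internal direct sum
decomposition of `A`, the multiplication `μ` respects the grading, and the
left-symmetric color identity holds on homogeneous elements. -/
structure IsLSCA {G k A : Type*} [AddCommGroup G] [DecidableEq G] [Field k]
    [AddCommGroup A] [Module k A]
    (ε : Bicharacter G k) (𝒜 : G → Submodule k A) (μ : A →ₗ[k] A →ₗ[k] A) : Prop where
  internal : DirectSum.IsInternal 𝒜
  graded_mul : ∀ a b : G, ∀ x ∈ 𝒜 a, ∀ y ∈ 𝒜 b, μ x y ∈ 𝒜 (a + b)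
  left_symm : ∀ a b c : G, ∀ x ∈ 𝒜 a, ∀ y ∈ 𝒜 b, ∀ z ∈ 𝒜 c,
    μ (μ x y) z - μ x (μ y z) = ε.ε a b • (μ (μ y x) z - μ y (μ x z))

/-- `P` is a Nijenhuis operator on the left-symmetric color algebra `A`, homogeneous
of degree `c`:  `P(x)P(y) = ε(|P|+|x|,|P|) P(P(x)y) + P(x P(y)) − ε(|x|,|P|) P(P(xy))`
for all homogeneous `x, y`. -/
def IsNijenhuisOp {G k A : Type*} [AddCommGroup G] [Field k] [AddCommGroup A] [Module k A]
    (ε : Bicharacter G k) (𝒜 : G → Submodule k A) (μ : A →ₗ[k] A →ₗ[k] A)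
    (c : G) (P : A →ₗ[k] A) : Prop :=
  (∀ a : G, ∀ x ∈ 𝒜 a, P x ∈ 𝒜 (a + c)) ∧
  ∀ a b : G, ∀ x ∈ 𝒜 a, ∀ y ∈ 𝒜 b,
    μ (P x) (P y)
      = ε.ε (c + a) c • P (μ (P x) y) + P (μ x (P y)) - ε.ε a c • P (P (μ x y))

/-- `P` is a Rota-Baxter operator of weight `lam` on the left-symmetric color algebra
`A`, homogeneous of degree `c`:
`P(x)P(y) = ε(|P|+|x|,|P|) P(P(x)y) + P(x P(y)) + lam·P(xy)` for all homogeneous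
`x, y`. -/
def IsRotaBaxterOp {G k A : Type*} [AddCommGroup G] [Field k] [AddCommGroup A] [Module k A]
    (ε : Bicharacter G k) (𝒜 : G → Submodule k A) (μ : A →ₗ[k] A →ₗ[k] A)
    (c : G) (lam : k) (P : A →ₗ[k] A) : Prop :=
  (∀ a : G, ∀ x ∈ 𝒜 a, P x ∈ 𝒜 (a + c)) ∧
  ∀ a b : G, ∀ x ∈ 𝒜 a, ∀ y ∈ 𝒜 b,
    μ (P x) (P y)
      = ε.ε (c + a) c • P (μ (P x) y) + P (μ x (P y)) + lam • P (μ x y)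

/-!
Let `D_S(x, y) = S(x)y - S(xy)` measure the failure of `S` to commute with right multiplications.
When `ε(c, c) = 1`, the Nijenhuis identity for `P` of degree `c` says exactly that
`D_P(x, P y) = ε(|x|, c) P(D_P(x, y))`. As `D` satisfies the cocycle rule
`D_{ST}(x, y) = D_S(T x, y) + S(D_T(x, y))`, the relation passes from `D_P` to `D_{P^d}`; iterating
it in the second argument gives `D_{P^d}(x, P^d y) = ε(|x|, c)^d P^d(D_{P^d}(x, y))`. As
`ε(|x|, c)^d = ε(|x|, d • c)`, this is the same characterization for `P^d`, of degree `d • c`.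
-/

namespace Bicharacter

variable {G k : Type*} [AddCommGroup G] [Field k] (ε : Bicharacter G k)

theorem zero_left (b : G) : ε.ε 0 b = 1 := by
  have h : ε.ε 0 b = ε.ε 0 b * ε.ε 0 b := by simpa only [add_zero] using ε.add_left 0 0 b
  exact (mul_eq_left₀ (ε.ne_zero 0 b)).mp h.symm

theorem zero_right (a : G) : ε.ε a 0 = 1 := by
  simpa only [ε.zero_left, mul_one] using ε.skew a 0

theorem nsmul_left (n : ℕ) (a b : G) : ε.ε (n • a) b = ε.ε a b ^ n := by
  induction n with
  | zero => rw [zero_nsmul, ε.zero_left, pow_zero]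
  | succ n ih => rw [succ_nsmul, ε.add_left, ih, pow_succ]

theorem nsmul_right (n : ℕ) (a b : G) : ε.ε a (n • b) = ε.ε a b ^ n := by
  induction n with
  | zero => rw [zero_nsmul, ε.zero_right, pow_zero]
  | succ n ih => rw [succ_nsmul, ε.add_right, ih, pow_succ]

end Bicharacter

section RightDefect

variable {R A : Type*} [CommRing R] [AddCommGroup A] [Module R A]

/-- The defect `(x, y) ↦ S(x)y - S(xy)` of an endomorphism `S` of an algebra with product `μ`:
the obstruction to `S` commuting with all right multiplications. -/
def rightDefect (μ : A →ₗ[R] A →ₗ[R] A) (S : Module.End R A) : A →ₗ[R] A →ₗ[R] A :=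
  μ ∘ₗ S - μ.compr₂ S

variable (μ : A →ₗ[R] A →ₗ[R] A)

theorem rightDefect_apply (S : Module.End R A) (x y : A) :
    rightDefect μ S x y = μ (S x) y - S (μ x y) :=
  rfl

theorem rightDefect_one : rightDefect μ 1 = 0 := by
  ext x y
  exact sub_self (μ x y)

theorem rightDefect_mul_apply (S T : Module.End R A) (x y : A) :
    rightDefect μ (S * T) x y = rightDefect μ S (T x) y + S (rightDefect μ T x y) := by
  simp only [rightDefect_apply, Module.End.mul_apply, map_sub, sub_add_sub_cancel]

end RightDefect

section HomogeneousPowers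

variable {G R A : Type*} [AddMonoid G] [CommRing R] [AddCommGroup A] [Module R A]
  {𝒜 : G → Submodule R A} {c : G} {P : Module.End R A}

theorem pow_apply_mem_add_nsmul (hP : ∀ a, ∀ x ∈ 𝒜 a, P x ∈ 𝒜 (a + c)) (n : ℕ) {a : G} {x : A}
    (hx : x ∈ 𝒜 a) : (P ^ n) x ∈ 𝒜 (a + n • c) := by
  induction n with
  | zero => simpa only [pow_zero, Module.End.one_apply, zero_nsmul, add_zero] using hx
  | succ n ih =>
    rw [pow_succ', Module.End.mul_apply, succ_nsmul, ← add_assoc]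
    exact hP _ _ ih

theorem map_pow_apply_of_map_apply_eq_smul {B : Type*} [AddCommGroup B] [Module R B]
    (hP : ∀ a, ∀ x ∈ 𝒜 a, P x ∈ 𝒜 (a + c)) {f : A →ₗ[R] B} {Q : Module.End R B} {t : R}
    (hf : ∀ b, ∀ y ∈ 𝒜 b, f (P y) = t • Q (f y)) (n : ℕ) {b : G} {y : A} (hy : y ∈ 𝒜 b) :
    f ((P ^ n) y) = t ^ n • (Q ^ n) (f y) := by
  induction n with
  | zero => simp only [pow_zero, Module.End.one_apply, one_smul]
  | succ n ih =>
    calc f ((P ^ (n + 1)) y) = f (P ((P ^ n) y)) := by rw [pow_succ', Module.End.mul_apply]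
      _ = t • Q (f ((P ^ n) y)) := hf _ _ (pow_apply_mem_add_nsmul hP n hy)
      _ = t ^ (n + 1) • (Q ^ (n + 1)) (f y) := by
        rw [ih, map_smul, smul_smul, ← pow_succ', pow_succ' Q, Module.End.mul_apply]

theorem rightDefect_pow_apply_apply {μ : A →ₗ[R] A →ₗ[R] A} {χ : G → R}
    (hP : ∀ a, ∀ x ∈ 𝒜 a, P x ∈ 𝒜 (a + c)) (hχ : ∀ a, χ (a + c) = χ a)
    (hD : ∀ a b, ∀ x ∈ 𝒜 a, ∀ y ∈ 𝒜 b, rightDefect μ P x (P y) = χ a • P (rightDefect μ P x y))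
    (n : ℕ) {a b : G} {x y : A} (hx : x ∈ 𝒜 a) (hy : y ∈ 𝒜 b) :
    rightDefect μ (P ^ n) x (P y) = χ a • P (rightDefect μ (P ^ n) x y) := by
  induction n generalizing a x with
  | zero => simp only [pow_zero, rightDefect_one, LinearMap.zero_apply, map_zero, smul_zero]
  | succ n ih =>
    have hcomm (z : A) : (P ^ n) (P z) = P ((P ^ n) z) :=
      LinearMap.congr_fun (Commute.pow_self P n).eq z
    calc rightDefect μ (P ^ (n + 1)) x (P y)
      _ = rightDefect μ (P ^ n) (P x) (P y) + (P ^ n) (rightDefect μ P x (P y)) := by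
        rw [pow_succ, rightDefect_mul_apply]
      _ = χ a • P (rightDefect μ (P ^ n) (P x) y) + (P ^ n) (χ a • P (rightDefect μ P x y)) := by
        rw [ih (hP a x hx), hχ, hD a b x hx y hy]
      _ = χ a • P (rightDefect μ (P ^ n) (P x) y + (P ^ n) (rightDefect μ P x y)) := by
        rw [map_smul, hcomm, map_add, smul_add]
      _ = χ a • P (rightDefect μ (P ^ (n + 1)) x y) := by
        rw [pow_succ, rightDefect_mul_apply]

end HomogeneousPowers

section Nijenhuis

variable {G k A : Type*} [AddCommGroup G] [Field k] [AddCommGroup A] [Module k A]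
  {ε : Bicharacter G k} {𝒜 : G → Submodule k A} {μ : A →ₗ[k] A →ₗ[k] A} {c : G}
  {P : Module.End k A}

theorem isNijenhuisOp_iff_rightDefect (hcc : ε.ε c c = 1) :
    IsNijenhuisOp ε 𝒜 μ c P ↔
      (∀ a, ∀ x ∈ 𝒜 a, P x ∈ 𝒜 (a + c)) ∧
      ∀ a b, ∀ x ∈ 𝒜 a, ∀ y ∈ 𝒜 b,
        rightDefect μ P x (P y) = ε.ε a c • P (rightDefect μ P x y) := by
  refine and_congr_right' <| forall₂_congr fun a b => forall₄_congr fun x _ y _ => ?_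
  have rearrange (u v w z : A) : u = v + w - z ↔ u - w = v - z := by
    rw [sub_eq_iff_eq_add, sub_add_eq_add_sub]
  rw [rearrange, ε.add_left, hcc, one_mul, rightDefect_apply, rightDefect_apply, map_sub, smul_sub]

theorem IsNijenhuisOp.smul (hP : IsNijenhuisOp ε 𝒜 μ c P) (r : k) :
    IsNijenhuisOp ε 𝒜 μ c (r • P) := by
  refine ⟨fun a x hx => (𝒜 _).smul_mem r (hP.1 a x hx), fun a b x hx y hy => ?_⟩
  simp only [LinearMap.smul_apply, map_smul, hP.2 a b x hx y hy]
  module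

theorem IsNijenhuisOp.pow (hP : IsNijenhuisOp ε 𝒜 μ c P) (hcc : ε.ε c c = 1) (d : ℕ) :
    IsNijenhuisOp ε 𝒜 μ (d • c) (P ^ d) := by
  obtain ⟨hdeg, hD⟩ := (isNijenhuisOp_iff_rightDefect hcc).mp hP
  have hdd : ε.ε (d • c) (d • c) = 1 := by
    rw [ε.nsmul_left, ε.nsmul_right, hcc, one_pow, one_pow]
  have hχ (a : G) : ε.ε (a + c) c = ε.ε a c := by rw [ε.add_left, hcc, mul_one]
  refine (isNijenhuisOp_iff_rightDefect hdd).mpr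
    ⟨fun a x hx => pow_apply_mem_add_nsmul hdeg d hx, fun a b x hx y hy => ?_⟩
  rw [ε.nsmul_right]
  exact map_pow_apply_of_map_apply_eq_smul hdeg
    (fun b y hy => rightDefect_pow_apply_apply (χ := (ε.ε · c)) hdeg hχ hD d hx hy) d hy

theorem nijenhuis_power_function_general (hP : IsNijenhuisOp ε 𝒜 μ c P) (hcc : ε.ε c c = 1)
    (d : ℕ) (r : k) : IsNijenhuisOp ε 𝒜 μ (d • c) (r • P ^ d) :=
  (hP.pow hcc d).smul r

end Nijenhuis

/-- If `P` is a Nijenhuis operator of degree `|P| = c` on the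
finite-dimensional left-symmetric color algebra `A` with `ε(|P|,|P|) = 1`, then for
every `d ∈ ℕ` and every `r ∈ k`, the map `r • P^d` (a "power function of degree `d`"
applied to `P`, homogeneous of degree `d • c`) is again a Nijenhuis operator on `A`. -/
theorem nijenhuis_power_function {G k A : Type*} [AddCommGroup G] [DecidableEq G] [Field k]
    [AddCommGroup A] [Module k A] [FiniteDimensional k A]
    (ε : Bicharacter G k) (𝒜 : G → Submodule k A) (μ : A →ₗ[k] A →ₗ[k] A)
    (hA : IsLSCA ε 𝒜 μ)
    (c : G) (P : Module.End k A) (hP : IsNijenhuisOp ε 𝒜 μ c P)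
    (hcc : ε.ε c c = 1) :
    ∀ (d : ℕ) (r : k), IsNijenhuisOp ε 𝒜 μ (d • c) (r • P ^ d) :=
  nijenhuis_power_function_general hP hcc
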